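/- arXiv:2301.00760 — 3 statements merged into one kernel-verified Lean document; each statement's English description precedes it below -/
import Mathlib

section
/- Let (A,δ_A,Δ_A) be a noncommutative Poisson coalgebra and V a vector space with linear maps ψ: V→V⊗A, α: V→A⊗V, β: V→V⊗A, q,t: V→A⊗A and δ_V,Δ_V: V→V⊗V. Define on E = A⊕V: δ_E(a) = δ_A(a), δ_E(x) = δ_V(x) + ψ(x) − τψ(x) + q(x), Δ_E(a) = Δ_A(a), Δ_E(x) = Δ_V(x) + α(x) + β(x) + t(x) (the type-(c2) unified coproduct A#^{q,t}V). Then (E,δ_E,Δ_E) is a noncommutative Poisson coalgebra if and only if (E,Δ_E) is coassociative, (E,δ_E) is a Lie coalgebra, and conditions (D1)–(D8) hold for all x ∈ V: (D1) x_[1]⊗β(x_[2]) = δ_V(x{0})⊗x{1} + τ₁₂(x₁⊗ψ(x₂)); (D2) x_[1]⊗α(x_[2]) = ψ(x₁)⊗x₂ + τ₁₂(x{−1}⊗δ_V(x{0})); (D3) x_[1]⊗t(x_[2]) + x⟨0⟩⊗Δ_A(x⟨1⟩) = ψ(x{0})⊗x{1} + τ₁₂(x{−1}⊗ψ(x{0}));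 (D4) x⟨1⟩⊗Δ_V(x⟨0⟩) = τψ(x₁)⊗x₂ + τ₁₂(x₁⊗τψ(x₂)); (D5) x⟨1⟩⊗β(x⟨0⟩) = τψ(x{0})⊗x{1} − τ₁₂(x{0}⊗δ_A(x{1})) − τ₁₂(x₁⊗q(x₂)); (D6) x⟨1⟩⊗α(x⟨0⟩) = τ₁₂(x{−1}⊗τψ(x{0})) − q(x₁)⊗x₂ − δ_A(x{−1})⊗x{0}; (D7) x_[1]⊗Δ_V(x_[2]) = δ_V(x₁)⊗x₂ + τ₁₂(x₁⊗δ_V(x₂)); (D8) x1q⊗Δ_A(x2q) − x⟨1⟩⊗t(x⟨0⟩) = q(x{0})⊗x{1} + δ_A(x1t)⊗x2t + τ₁₂(x{−1}⊗q(x{0})) + τ₁₂(x1t⊗δ_A(x2t)). -/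
/-!
The coassociativity and Lie-coalgebra axioms occur on both sides of the equivalence, so the content
is that the compatibility of `δ_E` and `Δ_E` amounts to (D1)–(D8). Both sides of the compatibility
are linear maps `E → E ⊗ (E ⊗ E)` with `E = A × V`, so it may be tested on `A` and on `V` separately.
On `A` it is the compatibility of `δ_A` and `Δ_A`, pushed forward along `A → E` (`defect_inl`).
On `x ∈ V` the difference of the two sides is a sum of eight terms, one in each of the
summands of `E ⊗ (E ⊗ E)` obtained by choosing `A` or `V` in every tensor slot (`defect_inr`). Up to
sign, the component in a given summand is the difference of the two sides of one (Di). The eight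
summands are independent (`emb_sum_eq_zero_iff`), so the defect vanishes exactly when all of
(D1)–(D8) hold at `x`.
-/

open scoped TensorProduct

noncomputable section

namespace NCP

section Maps

variable (k : Type*) [Field k]
variable (M N P : Type*) [AddCommGroup M] [Module k M] [AddCommGroup N] [Module k N]
  [AddCommGroup P] [Module k P]

/-- The flip map `τ : M ⊗ N → N ⊗ M`. -/
def τ : M ⊗[k] N →ₗ[k] N ⊗[k] M := (TensorProduct.comm k M N).toLinearMap

/-- The associator `(M ⊗ N) ⊗ P → M ⊗ (N ⊗ P)` as a linear map. -/
def asc : (M ⊗[k] N) ⊗[k] P →ₗ[k] M ⊗[k] (N ⊗[k] P) :=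
  (TensorProduct.assoc k M N P).toLinearMap

/-- `τ₁₂`, swapping the first two factors of a triple tensor product. -/
def τ₁₂ : M ⊗[k] (N ⊗[k] P) →ₗ[k] N ⊗[k] (M ⊗[k] P) :=
  asc k N M P ∘ₗ TensorProduct.map (τ k M N) LinearMap.id ∘ₗ
    (TensorProduct.assoc k M N P).symm.toLinearMap

end Maps

section Cyc

variable (k : Type*) [Field k] (M : Type*) [AddCommGroup M] [Module k M]

/-- The cyclic permutation `a ⊗ (b ⊗ c) ↦ c ⊗ (a ⊗ b)` on `M ⊗ (M ⊗ M)`. -/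
def cyc : M ⊗[k] (M ⊗[k] M) →ₗ[k] M ⊗[k] (M ⊗[k] M) :=
  (TensorProduct.comm k (M ⊗[k] M) M).toLinearMap ∘ₗ (TensorProduct.assoc k M M M).symm.toLinearMap

end Cyc

section MapsId

variable (k : Type*) [Field k] {M N : Type*} (P : Type*) [AddCommGroup M] [Module k M]
  [AddCommGroup N] [Module k N] [AddCommGroup P] [Module k P]

/-- `f ⊗ id` on `M ⊗ P`. -/
def lm (f : M →ₗ[k] N) : M ⊗[k] P →ₗ[k] N ⊗[k] P := TensorProduct.map f LinearMap.id

/-- `id ⊗ f` on `P ⊗ M`. -/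
def rm (f : M →ₗ[k] N) : P ⊗[k] M →ₗ[k] P ⊗[k] N := TensorProduct.map LinearMap.id f

end MapsId

section Bil

variable (k : Type*) [Field k] {X Y Z M N P : Type*}
  [AddCommGroup X] [Module k X] [AddCommGroup Y] [Module k Y] [AddCommGroup Z] [Module k Z]
  [AddCommGroup M] [Module k M] [AddCommGroup N] [Module k N] [AddCommGroup P] [Module k P]

/-- Transport a bilinear map along linear maps. -/
def bil (B : M →ₗ[k] N →ₗ[k] P) (f : X →ₗ[k] M) (g : Y →ₗ[k] N) (h : P →ₗ[k] Z) :
    X →ₗ[k] Y →ₗ[k] Z := ((B.compr₂ h).compl₂ g).comp f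

@[simp] lemma bil_apply (B : M →ₗ[k] N →ₗ[k] P) (f : X →ₗ[k] M) (g : Y →ₗ[k] N)
    (h : P →ₗ[k] Z) (x : X) (y : Y) : bil k B f g h x y = h (B (f x) (g y)) := rfl

end Bil

section Alg

variable (k : Type*) [Field k] {A B : Type*} [AddCommGroup A] [Module k A]
  [AddCommGroup B] [Module k B]

/-- A Lie bracket: bilinear, antisymmetric, Jacobi. -/
def IsLieBracket (br : A →ₗ[k] A →ₗ[k] A) : Prop :=
  (∀ x y, br x y = - br y x) ∧
  (∀ x y z, br x (br y z) + br y (br z x) + br z (br x y) = 0)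

/-- Associativity of a bilinear product. -/
def IsAssociative (m : A →ₗ[k] A →ₗ[k] A) : Prop :=
  ∀ x y z, m (m x y) z = m x (m y z)

/-- The Leibniz rule relating a bracket and a product. -/
def LeibnizRule (br m : A →ₗ[k] A →ₗ[k] A) : Prop :=
  ∀ x y z, br x (m y z) = m (br x y) z + m y (br x z)

/-- Noncommutative Poisson algebra. -/
def IsNCPoissonAlgebra (br m : A →ₗ[k] A →ₗ[k] A) : Prop :=
  IsLieBracket k br ∧ IsAssociative k m ∧ LeibnizRule k br m

/-- Coassociativity of a comultiplication. -/
def IsCoassociative (Δ : A →ₗ[k] A ⊗[k] A) : Prop :=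
  asc k A A A ∘ₗ TensorProduct.map Δ LinearMap.id ∘ₗ Δ =
    TensorProduct.map LinearMap.id Δ ∘ₗ Δ

/-- A Lie cobracket: co-antisymmetric and co-Jacobi. -/
def IsLieCobracket (δ : A →ₗ[k] A ⊗[k] A) : Prop :=
  τ k A A ∘ₗ δ = - δ ∧
  (LinearMap.id + cyc k A + cyc k A ∘ₗ cyc k A) ∘ₗ TensorProduct.map LinearMap.id δ ∘ₗ δ = 0

/-- The compatibility between cobrackets of a noncommutative Poisson coalgebra. -/
def PoissonCoCompat (δ Δ : A →ₗ[k] A ⊗[k] A) : Prop :=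
  TensorProduct.map LinearMap.id Δ ∘ₗ δ =
    asc k A A A ∘ₗ TensorProduct.map δ LinearMap.id ∘ₗ Δ
    + τ₁₂ k A A A ∘ₗ TensorProduct.map LinearMap.id δ ∘ₗ Δ

/-- Noncommutative Poisson coalgebra. -/
def IsNCPoissonCoalgebra (δ Δ : A →ₗ[k] A ⊗[k] A) : Prop :=
  IsLieCobracket k δ ∧ IsCoassociative k Δ ∧ PoissonCoCompat k δ Δ

/-- Lie bialgebra compatibility. -/
def IsLieBialgebraCompat (br : A →ₗ[k] A →ₗ[k] A) (δ : A →ₗ[k] A ⊗[k] A) : Prop :=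
  ∀ x y, δ (br x y) =
    TensorProduct.map (br x) LinearMap.id (δ y) + TensorProduct.map LinearMap.id (br x) (δ y)
    - TensorProduct.map (br y) LinearMap.id (δ x) - TensorProduct.map LinearMap.id (br y) (δ x)

/-- Antisymmetric infinitesimal bialgebra compatibility. -/
def IsASIBialgebra (m : A →ₗ[k] A →ₗ[k] A) (Δ : A →ₗ[k] A ⊗[k] A) : Prop :=
  (∀ x y, Δ (m x y) =
    TensorProduct.map (m x) LinearMap.id (Δ y)
    + TensorProduct.map LinearMap.id (m.flip y) (Δ x)) ∧
  (∀ x y,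
    TensorProduct.map (m x) LinearMap.id (Δ y) - TensorProduct.map LinearMap.id (m.flip x) (Δ y)
    + τ k A A (TensorProduct.map (m y) LinearMap.id (Δ x)
        - TensorProduct.map LinearMap.id (m.flip y) (Δ x)) = 0)

/-- `δ(x·y) = x·y₍₁₎⊗y₍₂₎ + x₍₁₎·y⊗x₍₂₎ + y₁⊗[x,y₂] + x₂⊗[y,x₁]`. -/
def PoissonBiCompat1 (br m : A →ₗ[k] A →ₗ[k] A) (δ Δ : A →ₗ[k] A ⊗[k] A) : Prop :=
  ∀ x y, δ (m x y) =
    TensorProduct.map (m x) LinearMap.id (δ y) + TensorProduct.map (m.flip y) LinearMap.id (δ x)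
    + TensorProduct.map LinearMap.id (br x) (Δ y)
    + TensorProduct.map LinearMap.id (br y) (τ k A A (Δ x))

/-- `Δ([x,y]) = [x,y₁]⊗y₂ + y₁⊗[x,y₂] + x₍₁₎·y⊗x₍₂₎ − x₍₁₎⊗y·x₍₂₎`. -/
def PoissonBiCompat2 (br m : A →ₗ[k] A →ₗ[k] A) (δ Δ : A →ₗ[k] A ⊗[k] A) : Prop :=
  ∀ x y, Δ (br x y) =
    TensorProduct.map (br x) LinearMap.id (Δ y) + TensorProduct.map LinearMap.id (br x) (Δ y)
    + TensorProduct.map (m.flip y) LinearMap.id (δ x)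
    - TensorProduct.map LinearMap.id (m y) (δ x)

/-- Noncommutative Poisson bialgebra. -/
def IsNCPoissonBialgebra (br m : A →ₗ[k] A →ₗ[k] A) (δ Δ : A →ₗ[k] A ⊗[k] A) : Prop :=
  IsNCPoissonAlgebra k br m ∧ IsNCPoissonCoalgebra k δ Δ ∧
  IsLieBialgebraCompat k br δ ∧ IsASIBialgebra k m Δ ∧
  PoissonBiCompat1 k br m δ Δ ∧ PoissonBiCompat2 k br m δ Δ

/-- A linear map is a homomorphism of (bracket, product) algebras. -/
def IsAlgMapHom (br m : A →ₗ[k] A →ₗ[k] A) (br' m' : B →ₗ[k] B →ₗ[k] B)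
    (f : A →ₗ[k] B) : Prop :=
  (∀ u v, f (br u v) = br' (f u) (f v)) ∧ (∀ u v, f (m u v) = m' (f u) (f v))

/-- A linear map is a homomorphism of (δ, Δ) coalgebras. -/
def IsCoalgMapHom (δ Δ : A →ₗ[k] A ⊗[k] A) (δ' Δ' : B →ₗ[k] B ⊗[k] B)
    (f : A →ₗ[k] B) : Prop :=
  TensorProduct.map f f ∘ₗ δ = δ' ∘ₗ f ∧ TensorProduct.map f f ∘ₗ Δ = Δ' ∘ₗ f

end Alg

section ProdOps

variable (k : Type*) [Field k] {A V : Type*} [AddCommGroup A] [Module k A]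
  [AddCommGroup V] [Module k V]

/-- Cocycle cross product bracket on `A × V`:
`[(a,x),(b,y)] = ([a,b] + x▷b − y▷a + σ(x,y), [x,y] + x⊲b − y⊲a + θ(a,b))`. -/
def ccBr (brA : A →ₗ[k] A →ₗ[k] A) (brV : V →ₗ[k] V →ₗ[k] V)
    (tr : V →ₗ[k] A →ₗ[k] A) (tl : V →ₗ[k] A →ₗ[k] V)
    (σ : V →ₗ[k] V →ₗ[k] A) (θ : A →ₗ[k] A →ₗ[k] V) :
    (A × V) →ₗ[k] (A × V) →ₗ[k] (A × V) :=
  bil k brA (LinearMap.fst k A V) (LinearMap.fst k A V) (LinearMap.inl k A V)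
  + bil k tr (LinearMap.snd k A V) (LinearMap.fst k A V) (LinearMap.inl k A V)
  - bil k tr.flip (LinearMap.fst k A V) (LinearMap.snd k A V) (LinearMap.inl k A V)
  + bil k σ (LinearMap.snd k A V) (LinearMap.snd k A V) (LinearMap.inl k A V)
  + bil k brV (LinearMap.snd k A V) (LinearMap.snd k A V) (LinearMap.inr k A V)
  + bil k tl (LinearMap.snd k A V) (LinearMap.fst k A V) (LinearMap.inr k A V)
  - bil k tl.flip (LinearMap.fst k A V) (LinearMap.snd k A V) (LinearMap.inr k A V)
  + bil k θ (LinearMap.fst k A V) (LinearMap.fst k A V) (LinearMap.inr k A V)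

/-- Cocycle cross product multiplication on `A × V`:
`(a,x)·(b,y) = (ab + x⇀b + a↼y + ω(x,y), xy + x←b + a→y + ν(a,b))`. -/
def ccMul (mA : A →ₗ[k] A →ₗ[k] A) (mV : V →ₗ[k] V →ₗ[k] V)
    (hp : V →ₗ[k] A →ₗ[k] A) (hl : A →ₗ[k] V →ₗ[k] A) (ω : V →ₗ[k] V →ₗ[k] A)
    (la : V →ₗ[k] A →ₗ[k] V) (ra : A →ₗ[k] V →ₗ[k] V) (ν : A →ₗ[k] A →ₗ[k] V) :
    (A × V) →ₗ[k] (A × V) →ₗ[k] (A × V) :=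
  bil k mA (LinearMap.fst k A V) (LinearMap.fst k A V) (LinearMap.inl k A V)
  + bil k hp (LinearMap.snd k A V) (LinearMap.fst k A V) (LinearMap.inl k A V)
  + bil k hl (LinearMap.fst k A V) (LinearMap.snd k A V) (LinearMap.inl k A V)
  + bil k ω (LinearMap.snd k A V) (LinearMap.snd k A V) (LinearMap.inl k A V)
  + bil k mV (LinearMap.snd k A V) (LinearMap.snd k A V) (LinearMap.inr k A V)
  + bil k la (LinearMap.snd k A V) (LinearMap.fst k A V) (LinearMap.inr k A V)
  + bil k ra (LinearMap.fst k A V) (LinearMap.snd k A V) (LinearMap.inr k A V)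
  + bil k ν (LinearMap.fst k A V) (LinearMap.fst k A V) (LinearMap.inr k A V)

/-- Type-(a1) unified product bracket:
`[(a,x),(b,y)] = ([a,b], [x,y]_V + x⊳b − y⊳a + θ(a,b))`. -/
def a1Br (brA : A →ₗ[k] A →ₗ[k] A) (brV : V →ₗ[k] V →ₗ[k] V)
    (tl : V →ₗ[k] A →ₗ[k] V) (θ : A →ₗ[k] A →ₗ[k] V) :
    (A × V) →ₗ[k] (A × V) →ₗ[k] (A × V) :=
  bil k brA (LinearMap.fst k A V) (LinearMap.fst k A V) (LinearMap.inl k A V)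
  + bil k brV (LinearMap.snd k A V) (LinearMap.snd k A V) (LinearMap.inr k A V)
  + bil k tl (LinearMap.snd k A V) (LinearMap.fst k A V) (LinearMap.inr k A V)
  - bil k tl.flip (LinearMap.fst k A V) (LinearMap.snd k A V) (LinearMap.inr k A V)
  + bil k θ (LinearMap.fst k A V) (LinearMap.fst k A V) (LinearMap.inr k A V)

/-- Type-(a1) unified product multiplication:
`(a,x)·(b,y) = (a·b, x·_V y + x←b + a→y + ν(a,b))`. -/
def a1Mul (mA : A →ₗ[k] A →ₗ[k] A) (mV : V →ₗ[k] V →ₗ[k] V)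
    (la : V →ₗ[k] A →ₗ[k] V) (ra : A →ₗ[k] V →ₗ[k] V) (ν : A →ₗ[k] A →ₗ[k] V) :
    (A × V) →ₗ[k] (A × V) →ₗ[k] (A × V) :=
  bil k mA (LinearMap.fst k A V) (LinearMap.fst k A V) (LinearMap.inl k A V)
  + bil k mV (LinearMap.snd k A V) (LinearMap.snd k A V) (LinearMap.inr k A V)
  + bil k la (LinearMap.snd k A V) (LinearMap.fst k A V) (LinearMap.inr k A V)
  + bil k ra (LinearMap.fst k A V) (LinearMap.snd k A V) (LinearMap.inr k A V)
  + bil k ν (LinearMap.fst k A V) (LinearMap.fst k A V) (LinearMap.inr k A V)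

/-- Type-(a2) unified product bracket:
`[(a,x),(b,y)] = ([a,b] + x▷b − y▷a + σ(x,y), [x,y]_V + x⊳b − y⊳a)`. -/
def a2Br (brA : A →ₗ[k] A →ₗ[k] A) (brV : V →ₗ[k] V →ₗ[k] V)
    (tr : V →ₗ[k] A →ₗ[k] A) (tl : V →ₗ[k] A →ₗ[k] V) (σ : V →ₗ[k] V →ₗ[k] A) :
    (A × V) →ₗ[k] (A × V) →ₗ[k] (A × V) :=
  bil k brA (LinearMap.fst k A V) (LinearMap.fst k A V) (LinearMap.inl k A V)
  + bil k tr (LinearMap.snd k A V) (LinearMap.fst k A V) (LinearMap.inl k A V)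
  - bil k tr.flip (LinearMap.fst k A V) (LinearMap.snd k A V) (LinearMap.inl k A V)
  + bil k σ (LinearMap.snd k A V) (LinearMap.snd k A V) (LinearMap.inl k A V)
  + bil k brV (LinearMap.snd k A V) (LinearMap.snd k A V) (LinearMap.inr k A V)
  + bil k tl (LinearMap.snd k A V) (LinearMap.fst k A V) (LinearMap.inr k A V)
  - bil k tl.flip (LinearMap.fst k A V) (LinearMap.snd k A V) (LinearMap.inr k A V)

/-- Type-(a2) unified product multiplication:
`(a,x)·(b,y) = (ab + x⇀b + a↼y + ω(x,y), x·_V y + x←b + a→y)`. -/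
def a2Mul (mA : A →ₗ[k] A →ₗ[k] A) (mV : V →ₗ[k] V →ₗ[k] V)
    (hp : V →ₗ[k] A →ₗ[k] A) (hl : A →ₗ[k] V →ₗ[k] A) (ω : V →ₗ[k] V →ₗ[k] A)
    (la : V →ₗ[k] A →ₗ[k] V) (ra : A →ₗ[k] V →ₗ[k] V) :
    (A × V) →ₗ[k] (A × V) →ₗ[k] (A × V) :=
  bil k mA (LinearMap.fst k A V) (LinearMap.fst k A V) (LinearMap.inl k A V)
  + bil k hp (LinearMap.snd k A V) (LinearMap.fst k A V) (LinearMap.inl k A V)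
  + bil k hl (LinearMap.fst k A V) (LinearMap.snd k A V) (LinearMap.inl k A V)
  + bil k ω (LinearMap.snd k A V) (LinearMap.snd k A V) (LinearMap.inl k A V)
  + bil k mV (LinearMap.snd k A V) (LinearMap.snd k A V) (LinearMap.inr k A V)
  + bil k la (LinearMap.snd k A V) (LinearMap.fst k A V) (LinearMap.inr k A V)
  + bil k ra (LinearMap.fst k A V) (LinearMap.snd k A V) (LinearMap.inr k A V)

/-- Biproduct bracket (no cocycles): `[(a,x),(b,y)] = ([a,b]+x▷b−y▷a, [x,y])`. -/
def bpBr (brA : A →ₗ[k] A →ₗ[k] A) (brV : V →ₗ[k] V →ₗ[k] V)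
    (tr : V →ₗ[k] A →ₗ[k] A) :
    (A × V) →ₗ[k] (A × V) →ₗ[k] (A × V) :=
  bil k brA (LinearMap.fst k A V) (LinearMap.fst k A V) (LinearMap.inl k A V)
  + bil k tr (LinearMap.snd k A V) (LinearMap.fst k A V) (LinearMap.inl k A V)
  - bil k tr.flip (LinearMap.fst k A V) (LinearMap.snd k A V) (LinearMap.inl k A V)
  + bil k brV (LinearMap.snd k A V) (LinearMap.snd k A V) (LinearMap.inr k A V)

/-- Biproduct multiplication: `(a,x)·(b,y) = (ab + x⇀b + a↼y, xy)`. -/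
def bpMul (mA : A →ₗ[k] A →ₗ[k] A) (mV : V →ₗ[k] V →ₗ[k] V)
    (hp : V →ₗ[k] A →ₗ[k] A) (hl : A →ₗ[k] V →ₗ[k] A) :
    (A × V) →ₗ[k] (A × V) →ₗ[k] (A × V) :=
  bil k mA (LinearMap.fst k A V) (LinearMap.fst k A V) (LinearMap.inl k A V)
  + bil k hp (LinearMap.snd k A V) (LinearMap.fst k A V) (LinearMap.inl k A V)
  + bil k hl (LinearMap.fst k A V) (LinearMap.snd k A V) (LinearMap.inl k A V)
  + bil k mV (LinearMap.snd k A V) (LinearMap.snd k A V) (LinearMap.inr k A V)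

end ProdOps

section CoprodOps

variable (k : Type*) [Field k] {A V : Type*} [AddCommGroup A] [Module k A]
  [AddCommGroup V] [Module k V]

/-- Biproduct Lie cobracket: `δ(a,x) = δ_A(a) + φ(a) − τφ(a) + δ_V(x)`. -/
def bpδ (δA : A →ₗ[k] A ⊗[k] A) (δV : V →ₗ[k] V ⊗[k] V) (φ : A →ₗ[k] V ⊗[k] A) :
    (A × V) →ₗ[k] (A × V) ⊗[k] (A × V) :=
  (TensorProduct.map (LinearMap.inl k A V) (LinearMap.inl k A V) ∘ₗ δA
   + TensorProduct.map (LinearMap.inr k A V) (LinearMap.inl k A V) ∘ₗ φ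
   - TensorProduct.map (LinearMap.inl k A V) (LinearMap.inr k A V) ∘ₗ τ k V A ∘ₗ φ)
     ∘ₗ LinearMap.fst k A V
  + (TensorProduct.map (LinearMap.inr k A V) (LinearMap.inr k A V) ∘ₗ δV)
      ∘ₗ LinearMap.snd k A V

/-- Biproduct comultiplication: `Δ(a,x) = Δ_A(a) + ρ(a) + γ(a) + Δ_V(x)`. -/
def bpΔ (ΔA : A →ₗ[k] A ⊗[k] A) (ΔV : V →ₗ[k] V ⊗[k] V)
    (ρ : A →ₗ[k] V ⊗[k] A) (γ : A →ₗ[k] A ⊗[k] V) :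
    (A × V) →ₗ[k] (A × V) ⊗[k] (A × V) :=
  (TensorProduct.map (LinearMap.inl k A V) (LinearMap.inl k A V) ∘ₗ ΔA
   + TensorProduct.map (LinearMap.inr k A V) (LinearMap.inl k A V) ∘ₗ ρ
   + TensorProduct.map (LinearMap.inl k A V) (LinearMap.inr k A V) ∘ₗ γ)
     ∘ₗ LinearMap.fst k A V
  + (TensorProduct.map (LinearMap.inr k A V) (LinearMap.inr k A V) ∘ₗ ΔV)
      ∘ₗ LinearMap.snd k A V

/-- Cycle cross coproduct Lie cobracket:
`δ(a) = δ_A(a) + φ(a) − τφ(a) + p(a)`, `δ(x) = δ_V(x) + ψ(x) − τψ(x) + q(x)`. -/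
def ccδ (δA : A →ₗ[k] A ⊗[k] A) (δV : V →ₗ[k] V ⊗[k] V)
    (φ : A →ₗ[k] V ⊗[k] A) (ψ : V →ₗ[k] V ⊗[k] A)
    (p : A →ₗ[k] V ⊗[k] V) (q : V →ₗ[k] A ⊗[k] A) :
    (A × V) →ₗ[k] (A × V) ⊗[k] (A × V) :=
  (TensorProduct.map (LinearMap.inl k A V) (LinearMap.inl k A V) ∘ₗ δA
   + TensorProduct.map (LinearMap.inr k A V) (LinearMap.inl k A V) ∘ₗ φ
   - TensorProduct.map (LinearMap.inl k A V) (LinearMap.inr k A V) ∘ₗ τ k V A ∘ₗ φ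
   + TensorProduct.map (LinearMap.inr k A V) (LinearMap.inr k A V) ∘ₗ p)
     ∘ₗ LinearMap.fst k A V
  + (TensorProduct.map (LinearMap.inr k A V) (LinearMap.inr k A V) ∘ₗ δV
     + TensorProduct.map (LinearMap.inr k A V) (LinearMap.inl k A V) ∘ₗ ψ
     - TensorProduct.map (LinearMap.inl k A V) (LinearMap.inr k A V) ∘ₗ τ k V A ∘ₗ ψ
     + TensorProduct.map (LinearMap.inl k A V) (LinearMap.inl k A V) ∘ₗ q)
      ∘ₗ LinearMap.snd k A V

/-- Cycle cross coproduct comultiplication: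
`Δ(a) = Δ_A(a) + ρ(a) + γ(a) + s(a)`, `Δ(x) = Δ_V(x) + α(x) + β(x) + t(x)`. -/
def ccΔ (ΔA : A →ₗ[k] A ⊗[k] A) (ΔV : V →ₗ[k] V ⊗[k] V)
    (ρ : A →ₗ[k] V ⊗[k] A) (γ : A →ₗ[k] A ⊗[k] V)
    (α : V →ₗ[k] A ⊗[k] V) (β : V →ₗ[k] V ⊗[k] A)
    (s : A →ₗ[k] V ⊗[k] V) (t : V →ₗ[k] A ⊗[k] A) :
    (A × V) →ₗ[k] (A × V) ⊗[k] (A × V) :=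
  (TensorProduct.map (LinearMap.inl k A V) (LinearMap.inl k A V) ∘ₗ ΔA
   + TensorProduct.map (LinearMap.inr k A V) (LinearMap.inl k A V) ∘ₗ ρ
   + TensorProduct.map (LinearMap.inl k A V) (LinearMap.inr k A V) ∘ₗ γ
   + TensorProduct.map (LinearMap.inr k A V) (LinearMap.inr k A V) ∘ₗ s)
     ∘ₗ LinearMap.fst k A V
  + (TensorProduct.map (LinearMap.inr k A V) (LinearMap.inr k A V) ∘ₗ ΔV
     + TensorProduct.map (LinearMap.inl k A V) (LinearMap.inr k A V) ∘ₗ α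
     + TensorProduct.map (LinearMap.inr k A V) (LinearMap.inl k A V) ∘ₗ β
     + TensorProduct.map (LinearMap.inl k A V) (LinearMap.inl k A V) ∘ₗ t)
      ∘ₗ LinearMap.snd k A V

/-- Type-(c1) unified coproduct Lie cobracket. -/
def c1δ (δA : A →ₗ[k] A ⊗[k] A) (δV : V →ₗ[k] V ⊗[k] V)
    (φ : A →ₗ[k] V ⊗[k] A) (ψ : V →ₗ[k] V ⊗[k] A) (p : A →ₗ[k] V ⊗[k] V) :
    (A × V) →ₗ[k] (A × V) ⊗[k] (A × V) :=
  (TensorProduct.map (LinearMap.inl k A V) (LinearMap.inl k A V) ∘ₗ δA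
   + TensorProduct.map (LinearMap.inr k A V) (LinearMap.inl k A V) ∘ₗ φ
   - TensorProduct.map (LinearMap.inl k A V) (LinearMap.inr k A V) ∘ₗ τ k V A ∘ₗ φ
   + TensorProduct.map (LinearMap.inr k A V) (LinearMap.inr k A V) ∘ₗ p)
     ∘ₗ LinearMap.fst k A V
  + (TensorProduct.map (LinearMap.inr k A V) (LinearMap.inr k A V) ∘ₗ δV
     + TensorProduct.map (LinearMap.inr k A V) (LinearMap.inl k A V) ∘ₗ ψ
     - TensorProduct.map (LinearMap.inl k A V) (LinearMap.inr k A V) ∘ₗ τ k V A ∘ₗ ψ)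
      ∘ₗ LinearMap.snd k A V

/-- Type-(c1) unified coproduct comultiplication. -/
def c1Δ (ΔA : A →ₗ[k] A ⊗[k] A) (ΔV : V →ₗ[k] V ⊗[k] V)
    (ρ : A →ₗ[k] V ⊗[k] A) (γ : A →ₗ[k] A ⊗[k] V)
    (α : V →ₗ[k] A ⊗[k] V) (β : V →ₗ[k] V ⊗[k] A) (s : A →ₗ[k] V ⊗[k] V) :
    (A × V) →ₗ[k] (A × V) ⊗[k] (A × V) :=
  (TensorProduct.map (LinearMap.inl k A V) (LinearMap.inl k A V) ∘ₗ ΔA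
   + TensorProduct.map (LinearMap.inr k A V) (LinearMap.inl k A V) ∘ₗ ρ
   + TensorProduct.map (LinearMap.inl k A V) (LinearMap.inr k A V) ∘ₗ γ
   + TensorProduct.map (LinearMap.inr k A V) (LinearMap.inr k A V) ∘ₗ s)
     ∘ₗ LinearMap.fst k A V
  + (TensorProduct.map (LinearMap.inr k A V) (LinearMap.inr k A V) ∘ₗ ΔV
     + TensorProduct.map (LinearMap.inl k A V) (LinearMap.inr k A V) ∘ₗ α
     + TensorProduct.map (LinearMap.inr k A V) (LinearMap.inl k A V) ∘ₗ β)
      ∘ₗ LinearMap.snd k A V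

/-- Type-(c2) unified coproduct Lie cobracket. -/
def c2δ (δA : A →ₗ[k] A ⊗[k] A) (δV : V →ₗ[k] V ⊗[k] V)
    (ψ : V →ₗ[k] V ⊗[k] A) (q : V →ₗ[k] A ⊗[k] A) :
    (A × V) →ₗ[k] (A × V) ⊗[k] (A × V) :=
  (TensorProduct.map (LinearMap.inl k A V) (LinearMap.inl k A V) ∘ₗ δA)
     ∘ₗ LinearMap.fst k A V
  + (TensorProduct.map (LinearMap.inr k A V) (LinearMap.inr k A V) ∘ₗ δV
     + TensorProduct.map (LinearMap.inr k A V) (LinearMap.inl k A V) ∘ₗ ψ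
     - TensorProduct.map (LinearMap.inl k A V) (LinearMap.inr k A V) ∘ₗ τ k V A ∘ₗ ψ
     + TensorProduct.map (LinearMap.inl k A V) (LinearMap.inl k A V) ∘ₗ q)
      ∘ₗ LinearMap.snd k A V

/-- Type-(c2) unified coproduct comultiplication. -/
def c2Δ (ΔA : A →ₗ[k] A ⊗[k] A) (ΔV : V →ₗ[k] V ⊗[k] V)
    (α : V →ₗ[k] A ⊗[k] V) (β : V →ₗ[k] V ⊗[k] A) (t : V →ₗ[k] A ⊗[k] A) :
    (A × V) →ₗ[k] (A × V) ⊗[k] (A × V) :=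
  (TensorProduct.map (LinearMap.inl k A V) (LinearMap.inl k A V) ∘ₗ ΔA)
     ∘ₗ LinearMap.fst k A V
  + (TensorProduct.map (LinearMap.inr k A V) (LinearMap.inr k A V) ∘ₗ ΔV
     + TensorProduct.map (LinearMap.inl k A V) (LinearMap.inr k A V) ∘ₗ α
     + TensorProduct.map (LinearMap.inr k A V) (LinearMap.inl k A V) ∘ₗ β
     + TensorProduct.map (LinearMap.inl k A V) (LinearMap.inl k A V) ∘ₗ t)
      ∘ₗ LinearMap.snd k A V

/-- The map `(a,x) ↦ (a + r(x), s(x))` on `A × V`. -/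
def rsMap (r : V →ₗ[k] A) (s : V →ₗ[k] V) : (A × V) →ₗ[k] (A × V) :=
  LinearMap.prod (LinearMap.fst k A V + r ∘ₗ LinearMap.snd k A V) (s ∘ₗ LinearMap.snd k A V)

end CoprodOps

end NCP

end

open NCP

namespace NCP

section Naturality

variable {k : Type*} [Field k] {M N P Q M' N' P' : Type*}
  [AddCommGroup M] [Module k M] [AddCommGroup N] [Module k N]
  [AddCommGroup P] [Module k P] [AddCommGroup Q] [Module k Q]
  [AddCommGroup M'] [Module k M'] [AddCommGroup N'] [Module k N']
  [AddCommGroup P'] [Module k P']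

/-- The map `f ⊗ (g ⊗ h)` on triple tensor products. -/
def emb (f : M →ₗ[k] M') (g : N →ₗ[k] N') (h : P →ₗ[k] P') :
    M ⊗[k] (N ⊗[k] P) →ₗ[k] M' ⊗[k] (N' ⊗[k] P') :=
  TensorProduct.map f (TensorProduct.map g h)

lemma asc_map_sub_left (f g : Q →ₗ[k] M ⊗[k] N) (h : P →ₗ[k] P') (u : Q ⊗[k] P) :
    asc k M N P' (TensorProduct.map (f - g) h u)
      = asc k M N P' (TensorProduct.map f h u) - asc k M N P' (TensorProduct.map g h u) := by
  rw [eq_sub_iff_add_eq, ← map_add, ← LinearMap.add_apply, ← TensorProduct.map_add_left,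
    sub_add_cancel]

lemma map_sub_right (h : P →ₗ[k] P') (f g : M →ₗ[k] M') :
    TensorProduct.map h (f - g) = TensorProduct.map h f - TensorProduct.map h g := by
  ext; simp [TensorProduct.tmul_sub]

lemma map_right_comp (f : M →ₗ[k] M') (g : N →ₗ[k] N') (h : P →ₗ[k] P')
    (D : Q →ₗ[k] N ⊗[k] P) (u : M ⊗[k] Q) :
    TensorProduct.map f (TensorProduct.map g h ∘ₗ D) u = emb f g h (rm k M D u) := by
  induction u with
  | zero => simp
  | add u v hu hv => simp only [map_add, hu, hv]
  | tmul m n => simp [emb, rm]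

lemma asc_map_map (f : M →ₗ[k] M') (g : N →ₗ[k] N') (h : P →ₗ[k] P')
    (u : (M ⊗[k] N) ⊗[k] P) :
    asc k M' N' P' (TensorProduct.map (TensorProduct.map f g) h u)
      = emb f g h (asc k M N P u) :=
  LinearMap.congr_fun (f := asc k M' N' P' ∘ₗ TensorProduct.map (TensorProduct.map f g) h)
    (g := emb f g h ∘ₗ asc k M N P)
    (TensorProduct.ext_threefold fun x y z => by simp [asc, emb]) u

lemma asc_map_left_comp (f : M →ₗ[k] M') (g : N →ₗ[k] N') (h : P →ₗ[k] P')
    (D : Q →ₗ[k] M ⊗[k] N) (u : Q ⊗[k] P) :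
    asc k M' N' P' (TensorProduct.map (TensorProduct.map f g ∘ₗ D) h u)
      = emb f g h (asc k M N P (lm k P D u)) := by
  rw [← asc_map_map]
  congr 1
  induction u with
  | zero => simp
  | add u v hu hv => simp only [map_add, hu, hv]
  | tmul m n => simp [lm]

lemma τ₁₂_emb (f : M →ₗ[k] M') (g : N →ₗ[k] N') (h : P →ₗ[k] P') (u : M ⊗[k] (N ⊗[k] P)) :
    τ₁₂ k M' N' P' (emb f g h u) = emb g f h (τ₁₂ k M N P u) := by
  induction u with
  | zero => simp
  | add u v hu hv => simp only [map_add, hu, hv]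
  | tmul m n =>
    induction n with
    | zero => simp
    | add u v hu hv => simp only [TensorProduct.tmul_add, map_add, hu, hv]
    | tmul n p => simp [emb, τ₁₂, τ, asc]

lemma emb_emb {M'' N'' P'' : Type*} [AddCommGroup M''] [Module k M'']
    [AddCommGroup N''] [Module k N''] [AddCommGroup P''] [Module k P'']
    (f : M →ₗ[k] M') (g : N →ₗ[k] N') (h : P →ₗ[k] P')
    (f' : M' →ₗ[k] M'') (g' : N' →ₗ[k] N'') (h' : P' →ₗ[k] P'') (u : M ⊗[k] (N ⊗[k] P)) :
    emb f' g' h' (emb f g h u) = emb (f' ∘ₗ f) (g' ∘ₗ g) (h' ∘ₗ h) u := by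
  simp only [emb, ← LinearMap.comp_apply, ← TensorProduct.map_comp]

@[simp] lemma emb_id (u : M ⊗[k] (N ⊗[k] P)) :
    emb (LinearMap.id : M →ₗ[k] M) (LinearMap.id : N →ₗ[k] N) (LinearMap.id : P →ₗ[k] P) u
      = u := by
  simp [emb]

@[simp] lemma emb_zero_left (g : N →ₗ[k] N') (h : P →ₗ[k] P') (u : M ⊗[k] (N ⊗[k] P)) :
    emb (0 : M →ₗ[k] M') g h u = 0 := by
  simp [emb]

@[simp] lemma emb_zero_mid (f : M →ₗ[k] M') (h : P →ₗ[k] P') (u : M ⊗[k] (N ⊗[k] P)) :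
    emb f (0 : N →ₗ[k] N') h u = 0 := by
  simp [emb]

@[simp] lemma emb_zero_right (f : M →ₗ[k] M') (g : N →ₗ[k] N') (u : M ⊗[k] (N ⊗[k] P)) :
    emb f g (0 : P →ₗ[k] P') u = 0 := by
  simp [emb]

end Naturality

section C2

variable {k : Type*} [Field k] {A V : Type*} [AddCommGroup A] [Module k A]
  [AddCommGroup V] [Module k V]

local notation "ιA" => LinearMap.inl k A V
local notation "ιV" => LinearMap.inr k A V
local notation "πA" => LinearMap.fst k A V
local notation "πV" => LinearMap.snd k A V

/-- The eight summands of `(A × V) ⊗ ((A × V) ⊗ (A × V))` are independent: each component is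
recovered by the corresponding triple of projections, which kills the other seven. -/
lemma emb_sum_eq_zero_iff (vva : V ⊗[k] (V ⊗[k] A)) (vav : V ⊗[k] (A ⊗[k] V))
    (vaa : V ⊗[k] (A ⊗[k] A)) (avv : A ⊗[k] (V ⊗[k] V)) (ava : A ⊗[k] (V ⊗[k] A))
    (aav : A ⊗[k] (A ⊗[k] V)) (vvv : V ⊗[k] (V ⊗[k] V)) (aaa : A ⊗[k] (A ⊗[k] A)) :
    emb ιV ιV ιA vva + emb ιV ιA ιV vav + emb ιV ιA ιA vaa + emb ιA ιV ιV avv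
      + emb ιA ιV ιA ava + emb ιA ιA ιV aav + emb ιV ιV ιV vvv + emb ιA ιA ιA aaa = 0 ↔
    vva = 0 ∧ vav = 0 ∧ vaa = 0 ∧ avv = 0 ∧ ava = 0 ∧ aav = 0 ∧ vvv = 0 ∧ aaa = 0 := by
  constructor
  · intro h
    refine ⟨?_, ?_, ?_, ?_, ?_, ?_, ?_, ?_⟩
    · simpa [emb_emb] using congrArg (emb πV πV πA) h
    · simpa [emb_emb] using congrArg (emb πV πA πV) h
    · simpa [emb_emb] using congrArg (emb πV πA πA) h
    · simpa [emb_emb] using congrArg (emb πA πV πV) h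
    · simpa [emb_emb] using congrArg (emb πA πV πA) h
    · simpa [emb_emb] using congrArg (emb πA πA πV) h
    · simpa [emb_emb] using congrArg (emb πV πV πV) h
    · simpa [emb_emb] using congrArg (emb πA πA πA) h
  · rintro ⟨rfl, rfl, rfl, rfl, rfl, rfl, rfl, rfl⟩
    simp

/-- The difference of the two sides of the compatibility condition for `(δ, Δ)`. -/
def defect {E : Type*} [AddCommGroup E] [Module k E] (δ Δ : E →ₗ[k] E ⊗[k] E) :
    E →ₗ[k] E ⊗[k] (E ⊗[k] E) :=
  TensorProduct.map LinearMap.id Δ ∘ₗ δ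
    - (asc k E E E ∘ₗ TensorProduct.map δ LinearMap.id ∘ₗ Δ
      + τ₁₂ k E E E ∘ₗ TensorProduct.map LinearMap.id δ ∘ₗ Δ)

lemma poissonCoCompat_iff_defect {E : Type*} [AddCommGroup E] [Module k E]
    (δ Δ : E →ₗ[k] E ⊗[k] E) : PoissonCoCompat k δ Δ ↔ defect δ Δ = 0 :=
  sub_eq_zero.symm

variable (δA ΔA : A →ₗ[k] A ⊗[k] A)
    (ψ : V →ₗ[k] V ⊗[k] A) (α : V →ₗ[k] A ⊗[k] V) (β : V →ₗ[k] V ⊗[k] A)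
    (q t : V →ₗ[k] A ⊗[k] A) (δV ΔV : V →ₗ[k] V ⊗[k] V)

lemma c2δ_comp_inl : c2δ k δA δV ψ q ∘ₗ ιA = TensorProduct.map ιA ιA ∘ₗ δA := by
  ext; simp [c2δ]

lemma c2Δ_comp_inl : c2Δ k ΔA ΔV α β t ∘ₗ ιA = TensorProduct.map ιA ιA ∘ₗ ΔA := by
  ext; simp [c2Δ]

lemma c2δ_comp_inr : c2δ k δA δV ψ q ∘ₗ ιV =
    TensorProduct.map ιV ιV ∘ₗ δV + TensorProduct.map ιV ιA ∘ₗ ψ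
      - TensorProduct.map ιA ιV ∘ₗ (τ k V A ∘ₗ ψ) + TensorProduct.map ιA ιA ∘ₗ q := by
  ext; simp [c2δ]

lemma c2Δ_comp_inr : c2Δ k ΔA ΔV α β t ∘ₗ ιV =
    TensorProduct.map ιV ιV ∘ₗ ΔV + TensorProduct.map ιA ιV ∘ₗ α
      + TensorProduct.map ιV ιA ∘ₗ β + TensorProduct.map ιA ιA ∘ₗ t := by
  ext; simp [c2Δ]

lemma c2δ_inl (a : A) : c2δ k δA δV ψ q (ιA a) = TensorProduct.map ιA ιA (δA a) :=
  LinearMap.congr_fun (c2δ_comp_inl δA ψ q δV) a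

lemma c2Δ_inl (a : A) : c2Δ k ΔA ΔV α β t (ιA a) = TensorProduct.map ιA ιA (ΔA a) :=
  LinearMap.congr_fun (c2Δ_comp_inl ΔA α β t ΔV) a

lemma c2δ_inr (x : V) : c2δ k δA δV ψ q (ιV x) =
    TensorProduct.map ιV ιV (δV x) + TensorProduct.map ιV ιA (ψ x)
      - TensorProduct.map ιA ιV (τ k V A (ψ x)) + TensorProduct.map ιA ιA (q x) :=
  LinearMap.congr_fun (c2δ_comp_inr δA ψ q δV) x

lemma c2Δ_inr (x : V) : c2Δ k ΔA ΔV α β t (ιV x) =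
    TensorProduct.map ιV ιV (ΔV x) + TensorProduct.map ιA ιV (α x)
      + TensorProduct.map ιV ιA (β x) + TensorProduct.map ιA ιA (t x) :=
  LinearMap.congr_fun (c2Δ_comp_inr ΔA α β t ΔV) x

/-- On `A` the defect of the unified coproduct is the image of the defect of `A`. -/
lemma defect_inl (a : A) :
    defect (c2δ k δA δV ψ q) (c2Δ k ΔA ΔV α β t) (ιA a)
      = emb ιA ιA ιA (defect δA ΔA a) := by
  simp only [defect, LinearMap.sub_apply, LinearMap.add_apply, LinearMap.comp_apply, c2δ_inl,
    c2Δ_inl, TensorProduct.map_map, LinearMap.id_comp, c2δ_comp_inl, c2Δ_comp_inl, map_right_comp,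
    asc_map_left_comp, τ₁₂_emb, map_sub, map_add]
  rfl

/-- Sorting the terms of the defect by component. Stated in an abstract group, so that the
normalisation does not have to look inside iterated tensor products. -/
lemma regroup {G : Type*} [AddCommGroup G]
    (aaa1 aaa2 aaa3 aaa4 aaa5 aaa6 aav1 aav2 aav3 aav4 ava1 ava2 ava3 ava4 avv1 avv2 avv3 vaa1
      vaa2 vaa3 vaa4 vav1 vav2 vav3 vva1 vva2 vva3 vvv1 vvv2 vvv3 : G) :
    vvv1 + vav1 + vva1 + vaa1 + vaa2 - (avv1 + aav1 + ava1 + aaa1) + aaa2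
      - (vvv2 + vav2 - avv2 + aav2 + aav3 + (vva2 + vaa3 - ava2 + aaa3) + aaa4
        + (vvv3 + vva3 - avv3 + ava3 + (vav3 + vaa4 - aav4 + aaa5) + ava4 + aaa6)) =
    vva1 - (vva2 + vva3) + (vav1 - (vav2 + vav3)) + (vaa1 + vaa2 - (vaa3 + vaa4))
      + -(avv1 - (avv2 + avv3)) + -(ava1 - (ava2 - ava4 - ava3))
      + -(aav1 - (aav4 - aav2 - aav3)) + (vvv1 - (vvv2 + vvv3))
      + (aaa2 - aaa1 - (aaa3 + aaa4 + aaa5 + aaa6)) := by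
  abel

/-- On `V` the defect of the unified coproduct splits into its eight components, which are, up to
sign, the differences of the two sides of (D1)–(D8). -/
lemma defect_inr (x : V) :
    defect (c2δ k δA δV ψ q) (c2Δ k ΔA ΔV α β t) (ιV x)
      = emb ιV ιV ιA (rm k V β (δV x)
          - (asc k V V A (lm k A δV (β x)) + τ₁₂ k V V A (rm k V ψ (ΔV x))))
      + emb ιV ιA ιV (rm k V α (δV x)
          - (asc k V A V (lm k V ψ (ΔV x)) + τ₁₂ k A V V (rm k A δV (α x))))
      + emb ιV ιA ιA (rm k V t (δV x) + rm k V ΔA (ψ x)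
          - (asc k V A A (lm k A ψ (β x)) + τ₁₂ k A V A (rm k A ψ (α x))))
      + emb ιA ιV ιV (-(rm k A ΔV (τ k V A (ψ x))
          - (asc k A V V (lm k V (τ k V A ∘ₗ ψ) (ΔV x))
            + τ₁₂ k V A V (rm k V (τ k V A ∘ₗ ψ) (ΔV x)))))
      + emb ιA ιV ιA (-(rm k A β (τ k V A (ψ x))
          - (asc k A V A (lm k A (τ k V A ∘ₗ ψ) (β x))
            - τ₁₂ k V A A (rm k V δA (β x)) - τ₁₂ k V A A (rm k V q (ΔV x)))))
      + emb ιA ιA ιV (-(rm k A α (τ k V A (ψ x))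
          - (τ₁₂ k A A V (rm k A (τ k V A ∘ₗ ψ) (α x))
            - asc k A A V (lm k V q (ΔV x)) - asc k A A V (lm k V δA (α x)))))
      + emb ιV ιV ιV (rm k V ΔV (δV x)
          - (asc k V V V (lm k V δV (ΔV x)) + τ₁₂ k V V V (rm k V δV (ΔV x))))
      + emb ιA ιA ιA (rm k A ΔA (q x) - rm k A t (τ k V A (ψ x))
          - (asc k A A A (lm k A q (β x)) + asc k A A A (lm k A δA (t x))
            + τ₁₂ k A A A (rm k A q (α x)) + τ₁₂ k A A A (rm k A δA (t x)))) := by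
  simp only [defect, LinearMap.sub_apply, LinearMap.add_apply, LinearMap.comp_apply, c2δ_inr,
    c2Δ_inr, map_add, map_sub, map_neg, TensorProduct.map_map, LinearMap.id_comp, c2δ_comp_inl,
    c2Δ_comp_inl, c2δ_comp_inr, c2Δ_comp_inr, TensorProduct.map_add_left,
    TensorProduct.map_add_right, asc_map_sub_left, map_sub_right,
    map_right_comp, asc_map_left_comp, τ₁₂_emb]
  exact regroup _ _ _ _ _ _ _ _ _ _ _ _ _ _ _ _ _ _ _ _ _ _ _ _ _ _ _ _ _ _

end C2

end NCP

/-- Characterization of when the type-(c2) unified coproduct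
`A #^{q,t} V` is a noncommutative Poisson coalgebra. -/
theorem statement13
    {k A V : Type*} [Field k] [CharZero k]
    [AddCommGroup A] [Module k A] [AddCommGroup V] [Module k V]
    (δA ΔA : A →ₗ[k] A ⊗[k] A) (hA : IsNCPoissonCoalgebra k δA ΔA)
    (ψ : V →ₗ[k] V ⊗[k] A) (α : V →ₗ[k] A ⊗[k] V) (β : V →ₗ[k] V ⊗[k] A)
    (q t : V →ₗ[k] A ⊗[k] A) (δV ΔV : V →ₗ[k] V ⊗[k] V) :
    IsNCPoissonCoalgebra k (c2δ k δA δV ψ q) (c2Δ k ΔA ΔV α β t) ↔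
      (IsCoassociative k (c2Δ k ΔA ΔV α β t) ∧ IsLieCobracket k (c2δ k δA δV ψ q)
      -- (D1)
      ∧ (∀ x : V, rm k V β (δV x)
          = asc k V V A (lm k A δV (β x)) + τ₁₂ k V V A (rm k V ψ (ΔV x)))
      -- (D2)
      ∧ (∀ x : V, rm k V α (δV x)
          = asc k V A V (lm k V ψ (ΔV x)) + τ₁₂ k A V V (rm k A δV (α x)))
      -- (D3)
      ∧ (∀ x : V, rm k V t (δV x) + rm k V ΔA (ψ x)
          = asc k V A A (lm k A ψ (β x)) + τ₁₂ k A V A (rm k A ψ (α x)))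
      -- (D4)
      ∧ (∀ x : V, rm k A ΔV (τ k V A (ψ x))
          = asc k A V V (lm k V (τ k V A ∘ₗ ψ) (ΔV x))
            + τ₁₂ k V A V (rm k V (τ k V A ∘ₗ ψ) (ΔV x)))
      -- (D5)
      ∧ (∀ x : V, rm k A β (τ k V A (ψ x))
          = asc k A V A (lm k A (τ k V A ∘ₗ ψ) (β x))
            - τ₁₂ k V A A (rm k V δA (β x)) - τ₁₂ k V A A (rm k V q (ΔV x)))
      -- (D6)
      ∧ (∀ x : V, rm k A α (τ k V A (ψ x))
          = τ₁₂ k A A V (rm k A (τ k V A ∘ₗ ψ) (α x))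
            - asc k A A V (lm k V q (ΔV x)) - asc k A A V (lm k V δA (α x)))
      -- (D7)
      ∧ (∀ x : V, rm k V ΔV (δV x)
          = asc k V V V (lm k V δV (ΔV x)) + τ₁₂ k V V V (rm k V δV (ΔV x)))
      -- (D8)
      ∧ (∀ x : V, rm k A ΔA (q x) - rm k A t (τ k V A (ψ x))
          = asc k A A A (lm k A q (β x)) + asc k A A A (lm k A δA (t x))
            + τ₁₂ k A A A (rm k A q (α x)) + τ₁₂ k A A A (rm k A δA (t x)))) := by
  have hA0 : defect δA ΔA = 0 := (poissonCoCompat_iff_defect δA ΔA).1 hA.2.2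
  have compat : PoissonCoCompat k (c2δ k δA δV ψ q) (c2Δ k ΔA ΔV α β t) ↔
      ∀ x : V, defect (c2δ k δA δV ψ q) (c2Δ k ΔA ΔV α β t) (LinearMap.inr k A V x) = 0 := by
    rw [poissonCoCompat_iff_defect]
    refine ⟨fun h x => by rw [h, LinearMap.zero_apply], fun h => ?_⟩
    apply LinearMap.prod_ext
    · refine LinearMap.ext fun a => ?_
      rw [LinearMap.comp_apply, defect_inl, hA0]
      simp
    · exact LinearMap.ext h
  simp only [defect_inr, emb_sum_eq_zero_iff, neg_eq_zero, sub_eq_zero (G := _ ⊗[k] _),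
    forall_and] at compat
  rw [IsNCPoissonCoalgebra, compat]
  exact and_left_comm
end

section
/- Let (A,δ_A,Δ_A) be a noncommutative Poisson coalgebra and (E,δ_E,Δ_E) a noncommutative Poisson coalgebra whose underlying vector space contains A as a subspace, such that A is a noncommutative Poisson subcoalgebra of E (δ_E(A) ⊆ A⊗A, Δ_E(A) ⊆ A⊗A, restricting to δ_A, Δ_A); let p: E→A be a linear projection with p(a) = a for a ∈ A and V = ker(p). Then there exist linear maps ψ: V→V⊗A, α: V→A⊗V, β: V→V⊗A, q,t: V→A⊗A and δ_V,Δ_V: V→V⊗V (explicitly: ψ = (π⊗p)∘δ_E|_V, δ_V = (π⊗π)∘δ_E|_V, q = (p⊗p)∘δ_E|_V, α = (p⊗π)∘Δ_E|_V, β = (π⊗p)∘Δ_E|_V, Δ_V = (π⊗π)∘Δ_E|_V, t = (p⊗p)∘Δ_E|_V, where π = id − p) such that the type-(c2) unified coproduct A#^{q,t}V on A⊕V, given by δ(a) = δ_A(a), δ(x) = δ_V(x) + ψ(x) − τψ(x) + q(x), Δ(a) = Δ_A(a), Δ(x) = Δ_V(x) + α(x) + β(x) + t(x), is a noncommutative Poisson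 coalgebra and the map (a,x) ↦ a + x is an isomorphism of noncommutative Poisson coalgebras A#^{q,t}V ≅ E. -/
/-!
Put `V = ker p`, with inclusion `i : V → E` and projection `π = id − ι p : E → V`.  Then
`e = (ι, i) : A × V → E` is bijective with inverse `(p, π)`, and `i π + ι p = id` on `E`.

Expanding `(i π + ι p) ⊗ (i π + ι p) = id` on `E ⊗ E` cuts any cooperation `D` on `E` into its four
components.  On `V` these are exactly the components of the unified coproduct, and on `A` only the
`A ⊗ A` component survives because `A` is a subcoalgebra, so `e` intertwines the unified coproduct
with `D` (`map_comp_c2Δ`).  The unified cobracket is the special case `α = −τψ`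
(`c2δ_eq_c2Δ`), and antisymmetry of `δ_E` says that its `A ⊗ V` component on `V` is indeed `−τψ`.

The axioms then need no computation with components: all structure maps in them are natural in the
underlying vector space, and `e ⊗ (e ⊗ e)` is injective, so they are pulled back from `E` along `e`
(`isNCPoissonCoalgebra_of_injective`).
-/

open scoped TensorProduct

open NCP

namespace NCP

/-! ### Pulling back the coalgebra axioms along an injective map -/

section Transfer

variable {k : Type*} [Field k] {M N : Type*} [AddCommGroup M] [Module k M]
  [AddCommGroup N] [Module k N]

lemma τ_naturality {M' N' : Type*} [AddCommGroup M'] [Module k M'] [AddCommGroup N'] [Module k N']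
    (f : M →ₗ[k] N) (g : M' →ₗ[k] N') :
    τ k N N' ∘ₗ TensorProduct.map f g = TensorProduct.map g f ∘ₗ τ k M M' := by
  ext x y; simp [τ]

lemma asc_naturality (f : M →ₗ[k] N) (u : (M ⊗[k] M) ⊗[k] M) :
    TensorProduct.map f (TensorProduct.map f f) (asc k M M M u)
      = asc k N N N (TensorProduct.map (TensorProduct.map f f) f u) := by
  refine LinearMap.congr_fun (f := TensorProduct.map f (TensorProduct.map f f) ∘ₗ asc k M M M)
    (g := asc k N N N ∘ₗ TensorProduct.map (TensorProduct.map f f) f) ?_ u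
  ext x y z; simp [asc]

lemma cyc_naturality (f : M →ₗ[k] N) (u : M ⊗[k] (M ⊗[k] M)) :
    TensorProduct.map f (TensorProduct.map f f) (cyc k M u)
      = cyc k N (TensorProduct.map f (TensorProduct.map f f) u) := by
  refine LinearMap.congr_fun (f := TensorProduct.map f (TensorProduct.map f f) ∘ₗ cyc k M)
    (g := cyc k N ∘ₗ TensorProduct.map f (TensorProduct.map f f)) ?_ u
  ext x y z; simp [cyc]

lemma τ₁₂_naturality (f : M →ₗ[k] N) (u : M ⊗[k] (M ⊗[k] M)) :
    TensorProduct.map f (TensorProduct.map f f) (τ₁₂ k M M M u)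
      = τ₁₂ k N N N (TensorProduct.map f (TensorProduct.map f f) u) := by
  refine LinearMap.congr_fun (f := TensorProduct.map f (TensorProduct.map f f) ∘ₗ τ₁₂ k M M M)
    (g := τ₁₂ k N N N ∘ₗ TensorProduct.map f (TensorProduct.map f f)) ?_ u
  ext x y z; simp [τ₁₂, asc, τ]

lemma map_map_id_left (f : M →ₗ[k] N) (D : M →ₗ[k] M ⊗[k] M) (D' : N →ₗ[k] N ⊗[k] N)
    (h : TensorProduct.map f f ∘ₗ D = D' ∘ₗ f) (u : M ⊗[k] M) :
    TensorProduct.map f (TensorProduct.map f f) (TensorProduct.map LinearMap.id D u)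
      = TensorProduct.map LinearMap.id D' (TensorProduct.map f f u) := by
  rw [← LinearMap.comp_apply, ← LinearMap.comp_apply, ← TensorProduct.map_comp,
    ← TensorProduct.map_comp, h, LinearMap.comp_id, LinearMap.id_comp]

lemma map_map_id_right (f : M →ₗ[k] N) (D : M →ₗ[k] M ⊗[k] M) (D' : N →ₗ[k] N ⊗[k] N)
    (h : TensorProduct.map f f ∘ₗ D = D' ∘ₗ f) (u : M ⊗[k] M) :
    TensorProduct.map (TensorProduct.map f f) f (TensorProduct.map D LinearMap.id u)
      = TensorProduct.map D' LinearMap.id (TensorProduct.map f f u) := by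
  rw [← LinearMap.comp_apply, ← LinearMap.comp_apply, ← TensorProduct.map_comp,
    ← TensorProduct.map_comp, h, LinearMap.comp_id, LinearMap.id_comp]

/-- The axioms of a noncommutative Poisson coalgebra are inherited along an injective map that
intertwines the cooperations; over a field, its tensor powers are again injective. -/
lemma isNCPoissonCoalgebra_of_injective (f : M →ₗ[k] N) (hf : Function.Injective f)
    {δ Δ : M →ₗ[k] M ⊗[k] M} {δ' Δ' : N →ₗ[k] N ⊗[k] N}
    (hδ : TensorProduct.map f f ∘ₗ δ = δ' ∘ₗ f) (hΔ : TensorProduct.map f f ∘ₗ Δ = Δ' ∘ₗ f)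
    (h : IsNCPoissonCoalgebra k δ' Δ') : IsNCPoissonCoalgebra k δ Δ := by
  obtain ⟨⟨h1, h2⟩, h3, h4⟩ := h
  have hff : Function.Injective (TensorProduct.map f f) :=
    TensorProduct.map_injective_of_flat_flat _ _ hf hf
  have hfff : Function.Injective (TensorProduct.map f (TensorProduct.map f f)) :=
    TensorProduct.map_injective_of_flat_flat _ _ hf hff
  have eδ (x : M) : TensorProduct.map f f (δ x) = δ' (f x) := LinearMap.congr_fun hδ x
  have eΔ (x : M) : TensorProduct.map f f (Δ x) = Δ' (f x) := LinearMap.congr_fun hΔ x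
  refine ⟨⟨?_, ?_⟩, ?_, ?_⟩
  · refine LinearMap.ext fun x => hff ?_
    have nat := LinearMap.congr_fun (τ_naturality f f) (δ x)
    have := LinearMap.congr_fun h1 (f x)
    simp only [LinearMap.comp_apply, LinearMap.neg_apply, map_neg] at this nat ⊢
    rw [← nat, eδ, this]
  · refine LinearMap.ext fun x => hfff ?_
    have := LinearMap.congr_fun h2 (f x)
    simpa only [LinearMap.comp_apply, LinearMap.add_apply, LinearMap.id_apply, LinearMap.zero_apply,
      map_add, map_zero, cyc_naturality, map_map_id_left f δ δ' hδ, eδ] using this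
  · refine LinearMap.ext fun x => hfff ?_
    have := LinearMap.congr_fun h3 (f x)
    simpa only [LinearMap.comp_apply, asc_naturality, map_map_id_left f Δ Δ' hΔ,
      map_map_id_right f Δ Δ' hΔ, eΔ] using this
  · refine LinearMap.ext fun x => hfff ?_
    have := LinearMap.congr_fun h4 (f x)
    simpa only [LinearMap.comp_apply, LinearMap.add_apply, map_add, asc_naturality, τ₁₂_naturality,
      map_map_id_left f Δ Δ' hΔ, map_map_id_left f δ δ' hδ, map_map_id_right f δ δ' hδ,
      eδ, eΔ] using this

end Transfer

/-! ### Unified coproducts from a splitting -/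

section Splitting

variable {k : Type*} [Field k] {A V E : Type*} [AddCommGroup A] [Module k A]
  [AddCommGroup V] [Module k V] [AddCommGroup E] [Module k E]

/-- The type-(c2) cobracket is the type-(c2) comultiplication with left coaction `−τψ`. -/
lemma c2δ_eq_c2Δ (δA : A →ₗ[k] A ⊗[k] A) (δV : V →ₗ[k] V ⊗[k] V)
    (ψ : V →ₗ[k] V ⊗[k] A) (q : V →ₗ[k] A ⊗[k] A) :
    c2δ k δA δV ψ q = c2Δ k δA δV (-(τ k V A ∘ₗ ψ)) ψ q := by
  simp only [c2δ, c2Δ, LinearMap.comp_neg]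
  abel_nf

/-- A splitting `i π + ι p = id` of `E` identifies a cooperation `D` on `E` that restricts to `DA`
along `ι` with the unified coproduct built from the four components of `D` on `V`. -/
lemma map_comp_c2Δ (ι : A →ₗ[k] E) (i : V →ₗ[k] E) (p : E →ₗ[k] A) (π : E →ₗ[k] V)
    (hsplit : i ∘ₗ π + ι ∘ₗ p = LinearMap.id)
    (DA : A →ₗ[k] A ⊗[k] A) (D : E →ₗ[k] E ⊗[k] E)
    (hD : TensorProduct.map ι ι ∘ₗ DA = D ∘ₗ ι) :
    TensorProduct.map (ι.coprod i) (ι.coprod i) ∘ₗ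
        c2Δ k DA (TensorProduct.map π π ∘ₗ D ∘ₗ i) (TensorProduct.map p π ∘ₗ D ∘ₗ i)
          (TensorProduct.map π p ∘ₗ D ∘ₗ i) (TensorProduct.map p p ∘ₗ D ∘ₗ i)
      = D ∘ₗ ι.coprod i := by
  have key (u : E ⊗[k] E) : TensorProduct.map (i ∘ₗ π) (i ∘ₗ π) u
      + TensorProduct.map (ι ∘ₗ p) (i ∘ₗ π) u + TensorProduct.map (i ∘ₗ π) (ι ∘ₗ p) u
      + TensorProduct.map (ι ∘ₗ p) (ι ∘ₗ p) u = u := by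
    have h : TensorProduct.map (i ∘ₗ π + ι ∘ₗ p) (i ∘ₗ π + ι ∘ₗ p) u = u := by
      rw [hsplit, TensorProduct.map_id, LinearMap.id_apply]
    simp only [TensorProduct.map_add_left, TensorProduct.map_add_right, LinearMap.add_apply] at h
    rw [← add_assoc] at h
    refine Eq.trans ?_ h
    abel
  refine LinearMap.prod_ext ?_ ?_
  · refine LinearMap.ext fun a => ?_
    have := LinearMap.congr_fun hD a
    simp only [LinearMap.comp_apply] at this
    simp only [c2Δ, LinearMap.comp_apply, LinearMap.add_apply, LinearMap.inl_apply,
      LinearMap.fst_apply, LinearMap.snd_apply, map_zero, add_zero, LinearMap.coprod_apply, ← this]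
    rw [← LinearMap.comp_apply (TensorProduct.map _ _) (TensorProduct.map _ _),
      ← TensorProduct.map_comp, LinearMap.coprod_inl]
  · refine LinearMap.ext fun x => ?_
    refine Eq.trans ?_ ((key (D (i x))).trans ?_)
    · simp only [c2Δ, LinearMap.comp_apply, LinearMap.add_apply, map_add, LinearMap.inr_apply,
        LinearMap.fst_apply, LinearMap.snd_apply, map_zero, zero_add]
      simp only [← LinearMap.comp_apply (TensorProduct.map _ _) (TensorProduct.map _ _),
        ← TensorProduct.map_comp, LinearMap.coprod_inl, LinearMap.coprod_inr, ← LinearMap.comp_assoc]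
    · simp

end Splitting

end NCP

/-! ### The coproduct attached to a projection onto a subcoalgebra -/

/-- A noncommutative Poisson coalgebra structure on `E` containing `A` as
a noncommutative Poisson subcoalgebra is isomorphic to a type-(c2) unified coproduct
`A #^{q,t} V` on `A ⊕ V`, `V = ker p`. -/
theorem statement14
    {k A E : Type*} [Field k] [CharZero k]
    [AddCommGroup A] [Module k A] [AddCommGroup E] [Module k E]
    (δA ΔA : A →ₗ[k] A ⊗[k] A) (hA : IsNCPoissonCoalgebra k δA ΔA)
    (δE ΔE : E →ₗ[k] E ⊗[k] E) (hE : IsNCPoissonCoalgebra k δE ΔE)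
    -- `A` is a subspace of `E` via `ι`, and `p` is a linear projection onto `A`
    (ι : A →ₗ[k] E) (hι : Function.Injective ι)
    (p : E →ₗ[k] A) (hp : ∀ a : A, p (ι a) = a)
    -- `A` is a noncommutative Poisson subcoalgebra of `E`, restricting to `δA`, `ΔA`
    (hιδ : TensorProduct.map ι ι ∘ₗ δA = δE ∘ₗ ι)
    (hιΔ : TensorProduct.map ι ι ∘ₗ ΔA = ΔE ∘ₗ ι) :
    ∃ (ψ : ↥(LinearMap.ker p) →ₗ[k] ↥(LinearMap.ker p) ⊗[k] A)
      (α : ↥(LinearMap.ker p) →ₗ[k] A ⊗[k] ↥(LinearMap.ker p))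
      (β : ↥(LinearMap.ker p) →ₗ[k] ↥(LinearMap.ker p) ⊗[k] A)
      (q t : ↥(LinearMap.ker p) →ₗ[k] A ⊗[k] A)
      (δV ΔV : ↥(LinearMap.ker p) →ₗ[k] ↥(LinearMap.ker p) ⊗[k] ↥(LinearMap.ker p)),
      IsNCPoissonCoalgebra k (c2δ k δA δV ψ q) (c2Δ k ΔA ΔV α β t) ∧
      ∃ e : (A × ↥(LinearMap.ker p)) →ₗ[k] E,
        (∀ u : A × ↥(LinearMap.ker p), e u = ι u.1 + (u.2 : E)) ∧
        Function.Bijective e ∧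
        TensorProduct.map e e ∘ₗ c2δ k δA δV ψ q = δE ∘ₗ e ∧
        TensorProduct.map e e ∘ₗ c2Δ k ΔA ΔV α β t = ΔE ∘ₗ e := by
  let i := (LinearMap.ker p).subtype
  let π : E →ₗ[k] LinearMap.ker p := (LinearMap.id - ι ∘ₗ p).codRestrict _ fun x => by simp [hp]
  have hsplit : i ∘ₗ π + ι ∘ₗ p = LinearMap.id := by
    ext x; simp [i, π]
  have heδ := map_comp_c2Δ ι i p π hsplit δA δE hιδ
  have heΔ := map_comp_c2Δ ι i p π hsplit ΔA ΔE hιΔ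
  -- antisymmetry of `δE` makes its `A ⊗ V` component on `V` equal to `−τψ`
  have hanti : TensorProduct.map p π ∘ₗ δE ∘ₗ i
      = -(τ k _ A ∘ₗ TensorProduct.map π p ∘ₗ δE ∘ₗ i) := by
    refine LinearMap.ext fun x => ?_
    have nat := LinearMap.congr_fun (τ_naturality π p) (δE (i x))
    have anti := LinearMap.congr_fun hE.1.1 (i x)
    simp only [LinearMap.comp_apply, LinearMap.neg_apply] at nat anti ⊢
    rw [nat, anti, map_neg, neg_neg]
  rw [hanti, ← c2δ_eq_c2Δ] at heδ
  have hinj : Function.Injective (ι.coprod i) := by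
    rw [injective_iff_map_eq_zero]
    rintro ⟨a, x⟩ h
    have hx : p x = 0 := x.2
    simp only [LinearMap.coprod_apply, i, Submodule.subtype_apply] at h
    have ha : a = 0 := by
      have := congrArg p h
      simpa [hp, hx] using this
    subst ha
    simpa using h
  have hsurj : Function.Surjective (ι.coprod i) := fun y =>
    ⟨(p y, π y), by simp [i, π]⟩
  exact ⟨_, _, _, _, _, _, _, isNCPoissonCoalgebra_of_injective _ hinj heδ heΔ hE,
    ι.coprod i, fun u => rfl, ⟨hinj, hsurj⟩, heδ, heΔ⟩
end

section
/- Let (A,δ_A,Δ_A) be a noncommutative Poisson coalgebra, V a vector space, and let Ω and Ω' be two families of structure maps (ψ,α,β,q,t,δ_V,Δ_V) on (A,V) such that the associated type-(c2) unified coproducts A#^{q,t}V and A#^{q',t'}V on A⊕V are noncommutative Poisson coalgebras. Then every homomorphism of noncommutative Poisson coalgebras φ: A#^{q,t}V → A#^{q',t'}V whose restriction to A (embedded as A⊕0) is the identity of A is of the form φ(a,x) = (a + r(x), s(x)) for uniquely determined linear maps r: V→A and s: V→V; moreover such a φ is an isomorphism if and only if s: V→V is a linear isomorphism. -/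
/-! The claim is linear algebra: a linear endomorphism of `A × V` that is the identity on `A` is
block upper triangular, `(a, x) ↦ (a + r x, s x)`, where `r` and `s` are the components of its
restriction to `V`. Since the diagonal block on `A` is the identity, such a map is bijective exactly
when the other diagonal block `s` is. Bijectivity is the right notion of isomorphism here, because
the inverse of a bijective coalgebra homomorphism is again a coalgebra homomorphism. -/

open scoped TensorProduct

open NCP

/-- Homomorphisms between type-(c2) unified coproducts which restrict to
the identity on `A` are exactly the maps `(a,x) ↦ (a + r(x), s(x))`, and such a map is an
isomorphism iff `s` is a linear isomorphism. -/
theorem statement15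
    {k A V : Type*} [Field k] [CharZero k]
    [AddCommGroup A] [Module k A] [AddCommGroup V] [Module k V]
    (δA ΔA : A →ₗ[k] A ⊗[k] A) (hA : IsNCPoissonCoalgebra k δA ΔA)
    (ψ : V →ₗ[k] V ⊗[k] A) (α : V →ₗ[k] A ⊗[k] V) (β : V →ₗ[k] V ⊗[k] A)
    (q t : V →ₗ[k] A ⊗[k] A) (δV ΔV : V →ₗ[k] V ⊗[k] V)
    (ψ' : V →ₗ[k] V ⊗[k] A) (α' : V →ₗ[k] A ⊗[k] V) (β' : V →ₗ[k] V ⊗[k] A)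
    (q' t' : V →ₗ[k] A ⊗[k] A) (δV' ΔV' : V →ₗ[k] V ⊗[k] V)
    (h₁ : IsNCPoissonCoalgebra k (c2δ k δA δV ψ q) (c2Δ k ΔA ΔV α β t))
    (h₂ : IsNCPoissonCoalgebra k (c2δ k δA δV' ψ' q') (c2Δ k ΔA ΔV' α' β' t'))
    (f : (A × V) →ₗ[k] (A × V))
    (hf : IsCoalgMapHom k (c2δ k δA δV ψ q) (c2Δ k ΔA ΔV α β t)
      (c2δ k δA δV' ψ' q') (c2Δ k ΔA ΔV' α' β' t') f)
    (hfA : ∀ a : A, f (a, 0) = (a, 0)) :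
    ∃ (r : V →ₗ[k] A) (s : V →ₗ[k] V),
      (∀ (a : A) (x : V), f (a, x) = (a + r x, s x)) ∧
      (∀ (r' : V →ₗ[k] A) (s' : V →ₗ[k] V),
        (∀ (a : A) (x : V), f (a, x) = (a + r' x, s' x)) → r' = r ∧ s' = s) ∧
      (Function.Bijective f ↔ Function.Bijective s) := by
  have hf_add : ∀ (a : A) (x : V), f (a, x) = (a + (f (0, x)).1, (f (0, x)).2) := by
    intro a x
    have h : ((a, x) : A × V) = (a, 0) + (0, x) := by simp
    rw [h, map_add, hfA]
    ext <;> simp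
  refine ⟨LinearMap.fst k A V ∘ₗ f ∘ₗ LinearMap.inr k A V,
    LinearMap.snd k A V ∘ₗ f ∘ₗ LinearMap.inr k A V, hf_add, ?_, ?_⟩
  · intro r' s' h
    constructor <;> ext x <;> simp [h]
  · constructor
    · rintro ⟨hi, hs⟩
      constructor
      · intro x y hxy
        have hxy' : (f (0, x)).2 = (f (0, y)).2 := hxy
        -- Equal `V`-components: the `A`-components can be matched by shifting along `A`.
        have h : f (-(f (0, x)).1, x) = f (-(f (0, y)).1, y) := by
          rw [hf_add (-(f (0, x)).1) x, hf_add (-(f (0, y)).1) y, hxy']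
          simp
        exact congrArg Prod.snd (hi h)
      · intro y
        obtain ⟨⟨a, x⟩, h⟩ := hs (0, y)
        rw [hf_add] at h
        exact ⟨x, congrArg Prod.snd h⟩
    · rintro ⟨hi, hs⟩
      constructor
      · rintro ⟨a, x⟩ ⟨b, y⟩ h
        rw [hf_add a x, hf_add b y] at h
        have hxy : (f (0, x)).2 = (f (0, y)).2 := (Prod.ext_iff.mp h).2
        obtain rfl : x = y := hi hxy
        have h' : a + (f (0, x)).1 = b + (f (0, x)).1 := (Prod.ext_iff.mp h).1
        rw [add_right_cancel h']
      · rintro ⟨b, y⟩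
        obtain ⟨x, hx⟩ := hs y
        have hx' : (f (0, x)).2 = y := hx
        refine ⟨(b - (f (0, x)).1, x), ?_⟩
        rw [hf_add, hx']
        simp
end
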